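/- Let H be a coquasitriangular Hopf algebra with universal r-form r and convolution inverse r̄. Then the antipode S of H is bijective, with inverse given by S^{-1}(a) = r(a_{(1)} ⊗ S(a_{(2)})) S(a_{(3)}) r̄(S²(a_{(4)}) ⊗ S(a_{(5)})). -/

import Mathlib

open TensorProduct MulOpposite

/-- The iterated (fourfold) comultiplication `H → H ⊗ (H ⊗ (H ⊗ (H ⊗ H)))`,
giving the Sweedler components `a₍₁₎ ⊗ a₍₂₎ ⊗ a₍₃₎ ⊗ a₍₄₎ ⊗ a₍₅₎`. -/
noncomputable def comul4 {H : Type} [Ring H] [HopfAlgebra ℂ H] :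
    H →ₗ[ℂ] H ⊗[ℂ] (H ⊗[ℂ] (H ⊗[ℂ] (H ⊗[ℂ] H))) :=
  (LinearMap.lTensor H (LinearMap.lTensor H (LinearMap.lTensor H
      (Coalgebra.comul (R := ℂ))))) ∘ₗ
    (LinearMap.lTensor H (LinearMap.lTensor H (Coalgebra.comul (R := ℂ)))) ∘ₗ
    (LinearMap.lTensor H (Coalgebra.comul (R := ℂ))) ∘ₗ
    (Coalgebra.comul (R := ℂ))

open Coalgebra HopfAlgebra

section Sweedler

set_option linter.unusedSectionVars false

variable {H : Type} [Ring H] [HopfAlgebra ℂ H]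
variable {M N P : Type} [AddCommGroup M] [Module ℂ M] [AddCommGroup N] [Module ℂ N]
  [AddCommGroup P] [Module ℂ P]

/-- Sweedler sum `F a₍₁₎ a₍₂₎`. -/
noncomputable def sw (F : H → H → M) (a : H) : M :=
  ∑ i ∈ (Coalgebra.Repr.arbitrary ℂ a).index,
    F ((Coalgebra.Repr.arbitrary ℂ a).left i) ((Coalgebra.Repr.arbitrary ℂ a).right i)

/-- Bilinearity of a plain function. -/
def Bil (F : H → H → M) : Prop :=
  (∀ y, IsLinearMap ℂ (fun x => F x y)) ∧ (∀ x, IsLinearMap ℂ (fun y => F x y))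

/-- The linear map on the tensor square. -/
noncomputable def Bil.lift {F : H → H → M} (h : Bil F) : H ⊗[ℂ] H →ₗ[ℂ] M :=
  TensorProduct.lift (LinearMap.mk₂ ℂ F (fun x y z => (h.1 z).map_add x y)
    (fun c x z => (h.1 z).map_smul c x) (fun z x y => (h.2 z).map_add x y)
    (fun c z x => (h.2 z).map_smul c x))

lemma Bil.lift_tmul {F : H → H → M} (h : Bil F) (x y : H) : h.lift (x ⊗ₜ y) = F x y := by
  simp [Bil.lift]

lemma sw_eq_lift {F : H → H → M} (h : Bil F) (a : H) : sw F a = h.lift (comul (R := ℂ) a) := by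
  rw [← (Coalgebra.Repr.arbitrary ℂ a).eq]
  simp [sw, Bil.lift_tmul]

lemma sw_congr {F G : H → H → M} (h : ∀ x y, F x y = G x y) (a : H) : sw F a = sw G a := by
  simp [sw, h]

lemma lin_id : IsLinearMap ℂ (fun x : M => x) := ⟨fun _ _ => rfl, fun _ _ => rfl⟩

lemma lin_map (φ : N →ₗ[ℂ] P) {g : M → N} (hg : IsLinearMap ℂ g) :
    IsLinearMap ℂ (fun x => φ (g x)) :=
  ⟨fun x y => by simp [hg.map_add], fun c x => by simp [hg.map_smul]⟩

lemma lin_bil (φ : N →ₗ[ℂ] H →ₗ[ℂ] P) {g : M → N} (hg : IsLinearMap ℂ g) (c : H) :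
    IsLinearMap ℂ (fun x => φ (g x) c) :=
  ⟨fun x y => by simp [hg.map_add], fun c x => by simp [hg.map_smul]⟩

lemma lin_mul_left {A : Type} [Ring A] [Algebra ℂ A] {g : M → A} (hg : IsLinearMap ℂ g) (c : A) :
    IsLinearMap ℂ (fun x => g x * c) :=
  ⟨fun x y => by simp [hg.map_add, add_mul], fun c x => by simp [hg.map_smul]⟩

lemma lin_mul_right {A : Type} [Ring A] [Algebra ℂ A] {g : M → A} (hg : IsLinearMap ℂ g) (c : A) :
    IsLinearMap ℂ (fun x => c * g x) :=
  ⟨fun x y => by simp [hg.map_add, mul_add], fun c x => by simp [hg.map_smul]⟩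

lemma lin_cmul_left {g : M → ℂ} (hg : IsLinearMap ℂ g) (c : ℂ) :
    IsLinearMap ℂ (fun x => g x * c) :=
  ⟨fun x y => by simp [hg.map_add, add_mul], fun c x => by simp [hg.map_smul, mul_assoc]⟩

lemma lin_cmul_right {g : M → ℂ} (hg : IsLinearMap ℂ g) (c : ℂ) :
    IsLinearMap ℂ (fun x => c * g x) :=
  ⟨fun x y => by simp [hg.map_add, mul_add], fun c x => by simp [hg.map_smul, mul_left_comm]⟩

lemma lin_smul_left {g : M → ℂ} (hg : IsLinearMap ℂ g) (c : N) :
    IsLinearMap ℂ (fun x => g x • c) :=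
  ⟨fun x y => by simp [hg.map_add, add_smul], fun c x => by simp [hg.map_smul, mul_smul]⟩

lemma lin_smul_right {g : M → N} (hg : IsLinearMap ℂ g) (c : ℂ) :
    IsLinearMap ℂ (fun x => c • g x) :=
  ⟨fun x y => by simp [hg.map_add], fun d x => by simp [hg.map_smul, smul_comm c d]⟩

lemma lin_tmul_left {g : M → H} (hg : IsLinearMap ℂ g) (c : H) :
    IsLinearMap ℂ (fun x => g x ⊗ₜ[ℂ] c) :=
  ⟨fun x y => by simp [hg.map_add, add_tmul], fun c x => by simp [hg.map_smul, smul_tmul']⟩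

lemma lin_tmul_right {g : M → H} (hg : IsLinearMap ℂ g) (c : H) :
    IsLinearMap ℂ (fun x => c ⊗ₜ[ℂ] g x) :=
  ⟨fun x y => by simp [hg.map_add, tmul_add], fun c x => by simp [hg.map_smul]⟩

lemma lin_sw {g : M → H} {F : H → H → N} (h : Bil F) (hg : IsLinearMap ℂ g) :
    IsLinearMap ℂ (fun x => sw F (g x)) := by
  simp only [sw_eq_lift h]
  exact ⟨fun x y => by simp [hg.map_add], fun c x => by simp [hg.map_smul]⟩

lemma lin_sw_in {F : M → H → H → N} (h : ∀ p q, IsLinearMap ℂ (fun x => F x p q)) (c : H) :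
    IsLinearMap ℂ (fun x => sw (fun p q => F x p q) c) :=
  ⟨fun x y => by simp [sw, (h _ _).map_add, Finset.sum_add_distrib],
   fun c x => by simp [sw, (h _ _).map_smul, Finset.smul_sum]⟩

lemma lin_comp {f : N → P} {g : M → N} (hf : IsLinearMap ℂ f) (hg : IsLinearMap ℂ g) :
    IsLinearMap ℂ (fun x => f (g x)) :=
  ⟨fun x y => by simp [hg.map_add, hf.map_add], fun c x => by simp [hg.map_smul, hf.map_smul]⟩

lemma map_sw {φ : M → N} (F : H → H → M) (a : H)
    (h : IsLinearMap ℂ φ := by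
        intros
        repeat' first
          | exact lin_id
          | exact LinearMap.isLinear _
          | with_reducible apply lin_cmul_left
          | with_reducible apply lin_cmul_right
          | with_reducible apply lin_mul_left
          | with_reducible apply lin_mul_right
          | with_reducible apply lin_smul_left
          | with_reducible apply lin_smul_right
          | with_reducible apply lin_tmul_left
          | with_reducible apply lin_tmul_right
          | with_reducible apply lin_sw
          | with_reducible apply lin_sw_in
          | with_reducible apply lin_bil
          | with_reducible apply lin_map
          | apply And.intro
          | intro _) :
    φ (sw F a) = sw (fun x y => φ (F x y)) a :=
  map_sum (h.mk' φ) _ _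

lemma sw_comm (F : H → H → H → H → M) (a b : H) :
    sw (fun x y => sw (fun u v => F x y u v) b) a
      = sw (fun u v => sw (fun x y => F x y u v) a) b := Finset.sum_comm

lemma sw_coassoc {F : H → H → H → M} (a : H)
    (h : (∀ y z, IsLinearMap ℂ (fun x => F x y z)) ∧ (∀ x z, IsLinearMap ℂ (fun y => F x y z)) ∧
      (∀ x y, IsLinearMap ℂ (fun z => F x y z)) := by
        intros
        repeat' first
          | exact lin_id
          | exact LinearMap.isLinear _
          | with_reducible apply lin_cmul_left
          | with_reducible apply lin_cmul_right
          | with_reducible apply lin_mul_left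
          | with_reducible apply lin_mul_right
          | with_reducible apply lin_smul_left
          | with_reducible apply lin_smul_right
          | with_reducible apply lin_tmul_left
          | with_reducible apply lin_tmul_right
          | with_reducible apply lin_sw
          | with_reducible apply lin_sw_in
          | with_reducible apply lin_bil
          | with_reducible apply lin_map
          | apply And.intro
          | intro _) :
    sw (fun m z => sw (fun x y => F x y z) m) a = sw (fun x m => sw (fun y z => F x y z) m) a := by
  obtain ⟨h1, h2, h3⟩ := h
  have hb : ∀ x, Bil (F x) := fun x => ⟨fun z => h2 x z, fun y => h3 x y⟩
  let G : H →ₗ[ℂ] (H ⊗[ℂ] H) →ₗ[ℂ] M :=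
    { toFun := fun x => (hb x).lift
      map_add' := fun x y => by
        ext u v
        simp [Bil.lift_tmul, (h1 _ _).map_add]
      map_smul' := fun c x => by
        ext u v
        simp [Bil.lift_tmul, (h1 _ _).map_smul] }
  have := congrArg (TensorProduct.lift G)
    (Coalgebra.sum_tmul_tmul_eq (Coalgebra.Repr.arbitrary ℂ a)
      (fun i => Coalgebra.Repr.arbitrary ℂ _) (fun i => Coalgebra.Repr.arbitrary ℂ _))
  simpa [G, Bil.lift_tmul, sw] using this

lemma sw_counit_left {F : H → M} (a : H)
    (h : IsLinearMap ℂ F := by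
        intros
        repeat' first
          | exact lin_id
          | exact LinearMap.isLinear _
          | with_reducible apply lin_cmul_left
          | with_reducible apply lin_cmul_right
          | with_reducible apply lin_mul_left
          | with_reducible apply lin_mul_right
          | with_reducible apply lin_smul_left
          | with_reducible apply lin_smul_right
          | with_reducible apply lin_tmul_left
          | with_reducible apply lin_tmul_right
          | with_reducible apply lin_sw
          | with_reducible apply lin_sw_in
          | with_reducible apply lin_bil
          | with_reducible apply lin_map
          | apply And.intro
          | intro _) :
    sw (fun x y => counit (R := ℂ) x • F y) a = F a := by
  have := congrArg F (Coalgebra.sum_counit_smul (Coalgebra.Repr.arbitrary ℂ a))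
  rw [← this]
  exact ((map_sum (h.mk' F) _ _).trans (by simp [sw])).symm

lemma sw_counit_right {F : H → M} (a : H)
    (h : IsLinearMap ℂ F := by
        intros
        repeat' first
          | exact lin_id
          | exact LinearMap.isLinear _
          | with_reducible apply lin_cmul_left
          | with_reducible apply lin_cmul_right
          | with_reducible apply lin_mul_left
          | with_reducible apply lin_mul_right
          | with_reducible apply lin_smul_left
          | with_reducible apply lin_smul_right
          | with_reducible apply lin_tmul_left
          | with_reducible apply lin_tmul_right
          | with_reducible apply lin_sw
          | with_reducible apply lin_sw_in
          | with_reducible apply lin_bil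
          | with_reducible apply lin_map
          | apply And.intro
          | intro _) :
    sw (fun x y => counit (R := ℂ) y • F x) a = F a := by
  have := congrArg (TensorProduct.lift (LinearMap.lsmul ℂ M ∘ₗ LinearMap.id).flip ∘ₗ
      TensorProduct.map (h.mk' F) LinearMap.id)
    (Coalgebra.sum_tmul_counit_eq (Coalgebra.Repr.arbitrary ℂ a))
  simpa [sw, -Coalgebra.sum_tmul_counit_eq, -Coalgebra.sum_map_tmul_counit_eq] using this

lemma sw_mul_antipode (a : H) :
    sw (fun x y => x * antipode ℂ y) a = counit (R := ℂ) a • (1 : H) :=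
  sum_mul_antipode_eq_smul _

lemma sw_antipode_mul (a : H) :
    sw (fun x y => antipode ℂ x * y) a = counit (R := ℂ) a • (1 : H) :=
  sum_antipode_mul_eq_smul _

/-- `Δ (S a) = S a₍₂₎ ⊗ S a₍₁₎`. -/
lemma comul_antipode (a : H) :
    comul (R := ℂ) (antipode ℂ a) = sw (fun x y => antipode ℂ y ⊗ₜ[ℂ] antipode ℂ x) a := by
  let G : H →ₗ[ℂ] H ⊗[ℂ] H := (TensorProduct.map (antipode ℂ) (antipode ℂ)) ∘ₗ
    (TensorProduct.comm ℂ H H).toLinearMap ∘ₗ comul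
  have hG : ∀ a, G a = sw (fun x y => antipode ℂ y ⊗ₜ[ℂ] antipode ℂ x) a := by
    intro a
    simp [G, sw, ← (Coalgebra.Repr.arbitrary ℂ a).eq]
  let D : H →ₗ[ℂ] H ⊗[ℂ] H := comul
  have hD : ∀ a, D a = sw (fun x y => x ⊗ₜ[ℂ] y) a := by
    intro a
    exact (Coalgebra.Repr.arbitrary ℂ a).eq.symm
  have key : WithConv.toConv (D ∘ₗ antipode ℂ) = WithConv.toConv G := by
    apply left_inv_eq_right_inv (a := WithConv.toConv D)
    · ext a
      rw [(Coalgebra.Repr.arbitrary ℂ a).convMul_apply]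
      have := congrArg (comul (R := ℂ)) (sw_antipode_mul a)
      simpa [sw, D, Bialgebra.comul_mul, Algebra.TensorProduct.one_def,
        Algebra.algebraMap_eq_smul_one] using this
    · ext a
      rw [(Coalgebra.Repr.arbitrary ℂ a).convMul_apply]
      change sw (fun x y => D x * G y) a = _
      calc sw (fun x y => D x * G y) a
          = sw (fun m y => sw (fun p q => (p ⊗ₜ[ℂ] q) * G y) m) a := by
            refine sw_congr (fun x y => ?_) a
            rw [hD]
            exact map_sw (φ := fun z => z * G y) _ _
        _ = sw (fun p m => sw (fun q y => (p ⊗ₜ[ℂ] q) * G y) m) a :=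
            sw_coassoc (F := fun p q y => (p ⊗ₜ[ℂ] q) * G y) a
        _ = sw (fun p m => (p * antipode ℂ m) ⊗ₜ[ℂ] (1 : H)) a := by
            refine sw_congr (fun p m => ?_) a
            calc sw (fun q y => (p ⊗ₜ[ℂ] q) * G y) m
                = sw (fun q y => sw (fun u v => (p * antipode ℂ v) ⊗ₜ[ℂ] (q * antipode ℂ u)) y) m := by
                  refine sw_congr (fun q y => ?_) m
                  rw [hG]
                  refine (map_sw (φ := fun z => (p ⊗ₜ[ℂ] q) * z) _ _).trans ?_
                  simp
              _ = sw (fun k v => sw (fun q u => (p * antipode ℂ v) ⊗ₜ[ℂ] (q * antipode ℂ u)) k) m :=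
                  (sw_coassoc (F := fun q u v => (p * antipode ℂ v) ⊗ₜ[ℂ] (q * antipode ℂ u)) m).symm
              _ = sw (fun k v => counit (R := ℂ) k • ((p * antipode ℂ v) ⊗ₜ[ℂ] (1 : H))) m := by
                  refine sw_congr (fun k v => ?_) m
                  rw [← map_sw (φ := fun z => (p * antipode ℂ v) ⊗ₜ[ℂ] z) (fun q u => q * antipode ℂ u),
                    sw_mul_antipode]
                  simp
              _ = _ := sw_counit_left (F := fun v => (p * antipode ℂ v) ⊗ₜ[ℂ] (1 : H)) m
        _ = _ := by
            rw [← map_sw (φ := fun z => z ⊗ₜ[ℂ] (1 : H)) (fun p m => p * antipode ℂ m),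
              sw_mul_antipode]
            simp [Algebra.TensorProduct.one_def, Algebra.algebraMap_eq_smul_one, smul_tmul']
  rw [← hG]
  exact congrArg (fun z => z.ofConv a) key

lemma sw_antipode {F : H → H → M} (a : H)
    (h : Bil F := by
        intros
        repeat' first
          | exact lin_id
          | exact LinearMap.isLinear _
          | with_reducible apply lin_cmul_left
          | with_reducible apply lin_cmul_right
          | with_reducible apply lin_mul_left
          | with_reducible apply lin_mul_right
          | with_reducible apply lin_smul_left
          | with_reducible apply lin_smul_right
          | with_reducible apply lin_tmul_left
          | with_reducible apply lin_tmul_right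
          | with_reducible apply lin_sw
          | with_reducible apply lin_sw_in
          | with_reducible apply lin_bil
          | with_reducible apply lin_map
          | apply And.intro
          | intro _) :
    sw F (antipode ℂ a) = sw (fun x y => F (antipode ℂ y) (antipode ℂ x)) a := by
  rw [sw_eq_lift h, comul_antipode]
  simp [sw, Bil.lift_tmul]

lemma conv_uniq (P R Q : H →ₗ[ℂ] H →ₗ[ℂ] ℂ)
    (h1 : ∀ a b, sw (fun x y => sw (fun u v => P x u * R y v) b) a
      = counit (R := ℂ) a * counit (R := ℂ) b)
    (h2 : ∀ a b, sw (fun x y => sw (fun u v => R x u * Q y v) b) a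
      = counit (R := ℂ) a * counit (R := ℂ) b) : P = Q := by
  have : WithConv.toConv (TensorProduct.lift P) = WithConv.toConv (TensorProduct.lift Q) := by
    apply left_inv_eq_right_inv (a := WithConv.toConv (TensorProduct.lift R))
    · ext a b
      simpa [((Coalgebra.Repr.arbitrary ℂ a).tmul (Coalgebra.Repr.arbitrary ℂ b)).convMul_apply,
        Finset.sum_product, sw, mul_comm] using h1 a b
    · ext a b
      simpa [((Coalgebra.Repr.arbitrary ℂ a).tmul (Coalgebra.Repr.arbitrary ℂ b)).convMul_apply,
        Finset.sum_product, sw, mul_comm] using h2 a b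
  ext a b
  exact congrArg (fun z => z.ofConv (a ⊗ₜ[ℂ] b)) this

end Sweedler


section Main

variable {H : Type} [Ring H] [HopfAlgebra ℂ H]

/-- The functional `f a = r(a₍₁₎ ⊗ S a₍₂₎)`. -/
noncomputable def ff (r : H →ₗ[ℂ] H →ₗ[ℂ] ℂ) : H →ₗ[ℂ] ℂ :=
  TensorProduct.lift (r.compl₂ (antipode ℂ)) ∘ₗ comul

lemma ff_apply (r : H →ₗ[ℂ] H →ₗ[ℂ] ℂ) (a : H) :
    ff r a = sw (fun x y => r x (antipode ℂ y)) a := by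
  simp [ff, sw, ← (Coalgebra.Repr.arbitrary ℂ a).eq]

/-- The functional `g a = r(S² a₍₁₎ ⊗ a₍₂₎)`. -/
noncomputable def gg (r : H →ₗ[ℂ] H →ₗ[ℂ] ℂ) : H →ₗ[ℂ] ℂ :=
  TensorProduct.lift (r ∘ₗ antipode ℂ ∘ₗ antipode ℂ) ∘ₗ comul

lemma gg_apply (r : H →ₗ[ℂ] H →ₗ[ℂ] ℂ) (a : H) :
    gg r a = sw (fun x y => r (antipode ℂ (antipode ℂ x)) y) a := by
  simp [gg, sw, ← (Coalgebra.Repr.arbitrary ℂ a).eq]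

/-- `r(S a ⊗ S b) = r(a ⊗ b)`, together with `r̄(a ⊗ b) = r(S a ⊗ b)`. -/
lemma r_antipode (r rbar : H →ₗ[ℂ] H →ₗ[ℂ] ℂ)
    (hr2 : ∀ a b c, r (a * b) c = sw (fun u v => r a u * r b v) c)
    (hr2' : ∀ c : H, r 1 c = counit (R := ℂ) c)
    (hr3 : ∀ a b c, r a (b * c) = sw (fun x y => r x c * r y b) a)
    (hr3' : ∀ a : H, r a 1 = counit (R := ℂ) a)
    (hbar : ∀ a b, sw (fun x y => sw (fun u v => rbar x u * r y v) b) a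
      = counit (R := ℂ) a * counit (R := ℂ) b) :
    (∀ a b, rbar a b = r (antipode ℂ a) b) ∧
      (∀ a b, r (antipode ℂ a) (antipode ℂ b) = r a b) := by
  have A : ∀ a b, sw (fun x y => sw (fun u v => r x u * (r ∘ₗ antipode ℂ) y v) b) a
      = counit (R := ℂ) a * counit (R := ℂ) b := by
    intro a b
    calc _ = sw (fun x y => r (x * antipode ℂ y) b) a :=
          sw_congr (fun x y => (hr2 _ _ _).symm) a
      _ = r (sw (fun x y => x * antipode ℂ y) a) b := (map_sw (φ := fun z => r z b) _ _).symm
      _ = _ := by rw [sw_mul_antipode]; simp [hr2']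
  have B : ∀ a b, sw (fun x y => sw (fun u v => (r ∘ₗ antipode ℂ) x u * r y v) b) a
      = counit (R := ℂ) a * counit (R := ℂ) b := by
    intro a b
    calc _ = sw (fun x y => r (antipode ℂ x * y) b) a :=
          sw_congr (fun x y => (hr2 _ _ _).symm) a
      _ = r (sw (fun x y => antipode ℂ x * y) a) b := (map_sw (φ := fun z => r z b) _ _).symm
      _ = _ := by rw [sw_antipode_mul]; simp [hr2']
  have C : ∀ a b, sw (fun x y => sw (fun u v =>
      (r.compl₁₂ (antipode ℂ) (antipode ℂ)) x u * (r ∘ₗ antipode ℂ) y v) b) a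
      = counit (R := ℂ) a * counit (R := ℂ) b := by
    intro a b
    calc _ = sw (fun u v => sw (fun x y =>
            r (antipode ℂ y) v * r (antipode ℂ x) (antipode ℂ u)) a) b := by
          rw [sw_comm]
          exact sw_congr (fun u v => sw_congr (fun x y => mul_comm _ _) a) b
      _ = sw (fun u v => r (antipode ℂ a) (antipode ℂ u * v)) b := by
          refine sw_congr (fun u v => ?_) b
          rw [hr3, sw_antipode]
      _ = r (antipode ℂ a) (sw (fun u v => antipode ℂ u * v) b) :=
          (map_sw (φ := fun z => r (antipode ℂ a) z) _ _).symm
      _ = _ := by rw [sw_antipode_mul]; simp [hr3', mul_comm]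
  constructor
  · intro a b
    rw [conv_uniq rbar r (r ∘ₗ antipode ℂ) hbar A]
    rfl
  · intro a b
    have := conv_uniq (r.compl₁₂ (antipode ℂ) (antipode ℂ)) (r ∘ₗ antipode ℂ) r C B
    exact congrArg (fun z : H →ₗ[ℂ] H →ₗ[ℂ] ℂ => z a b) this

/-- `f(a₍₁₎) S²(a₍₂₎) = a₍₁₎ f(a₍₂₎)`. -/
lemma ff_sq (r : H →ₗ[ℂ] H →ₗ[ℂ] ℂ)
    (hr1 : ∀ a b, sw (fun x y => sw (fun u v => r x u • (y * v)) b) a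
      = sw (fun x y => sw (fun u v => r y v • (u * x)) b) a) (a : H) :
    sw (fun x y => ff r x • antipode ℂ (antipode ℂ y)) a = sw (fun x y => ff r y • x) a := by
  have E : ∀ a c, sw (fun x y => sw (fun u v => r x (antipode ℂ v) • (y * antipode ℂ u)) c) a
      = sw (fun x y => sw (fun u v => r y (antipode ℂ u) • (antipode ℂ v * x)) c) a := by
    intro a c
    calc _ = sw (fun x y => sw (fun u v => r x u • (y * v)) (antipode ℂ c)) a := by
          refine sw_congr (fun x y => ?_) a
          rw [sw_antipode]
      _ = sw (fun x y => sw (fun u v => r y v • (u * x)) (antipode ℂ c)) a := hr1 _ _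
      _ = _ := by
          refine sw_congr (fun x y => ?_) a
          rw [sw_antipode]
  have F : ∀ a, sw (fun x m => sw (fun p v => ff r p • (antipode ℂ v * x)) m) a
      = ff r a • (1 : H) := by
    intro a
    calc sw (fun x m => sw (fun p v => ff r p • (antipode ℂ v * x)) m) a
        = sw (fun x m => sw (fun p v => sw (fun y u =>
            r y (antipode ℂ u) • (antipode ℂ v * x)) p) m) a := by
          refine sw_congr (fun x m => sw_congr (fun p v => ?_) m) a
          rw [ff_apply]
          exact map_sw (φ := fun z : ℂ => z • (antipode ℂ v * x)) _ _
      _ = sw (fun x m => sw (fun y t => sw (fun u v =>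
            r y (antipode ℂ u) • (antipode ℂ v * x)) t) m) a := by
          refine sw_congr (fun x m => ?_) a
          exact sw_coassoc (F := fun y u v => r y (antipode ℂ u) • (antipode ℂ v * x)) m
      _ = sw (fun s t => sw (fun x y => sw (fun u v =>
            r y (antipode ℂ u) • (antipode ℂ v * x)) t) s) a :=
          (sw_coassoc (F := fun x y t => sw (fun u v =>
            r y (antipode ℂ u) • (antipode ℂ v * x)) t) a).symm
      _ = sw (fun s t => sw (fun x y => sw (fun u v =>
            r x (antipode ℂ v) • (y * antipode ℂ u)) t) s) a :=
          sw_congr (fun s t => (E s t).symm) a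
      _ = sw (fun x m => sw (fun y t => sw (fun u v =>
            r x (antipode ℂ v) • (y * antipode ℂ u)) t) m) a :=
          sw_coassoc (F := fun x y t => sw (fun u v =>
            r x (antipode ℂ v) • (y * antipode ℂ u)) t) a
      _ = sw (fun x m => r x (antipode ℂ m) • (1 : H)) a := by
          refine sw_congr (fun x m => ?_) a
          calc _ = sw (fun p v => sw (fun y u => r x (antipode ℂ v) • (y * antipode ℂ u)) p) m :=
                (sw_coassoc (F := fun y u v => r x (antipode ℂ v) • (y * antipode ℂ u)) m).symm
            _ = sw (fun p v => counit (R := ℂ) p • r x (antipode ℂ v) • (1 : H)) m := by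
                refine sw_congr (fun p v => ?_) m
                rw [← map_sw (φ := fun z : H => r x (antipode ℂ v) • z)
                  (fun y u => y * antipode ℂ u), sw_mul_antipode, smul_comm]
            _ = _ := sw_counit_left (F := fun v => r x (antipode ℂ v) • (1 : H)) m
      _ = ff r a • (1 : H) := by
          rw [ff_apply]
          exact (map_sw (φ := fun z : ℂ => z • (1 : H)) _ _).symm
  have G : ∀ a, sw (fun x m => antipode ℂ x *
      sw (fun p v => ff r p • antipode ℂ (antipode ℂ v)) m) a = ff r a • (1 : H) := by
    intro a
    have := congrArg (antipode ℂ) (F a)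
    rw [map_smul, antipode_one] at this
    rw [← this, map_sw (φ := fun z => antipode ℂ z)]
    refine sw_congr (fun x m => ?_) a
    rw [map_sw (φ := fun z => antipode ℂ z), map_sw (φ := fun z => antipode ℂ x * z)]
    refine sw_congr (fun p v => ?_) m
    simp [antipode_mul_antidistrib]
  calc sw (fun x y => ff r x • antipode ℂ (antipode ℂ y)) a
      = sw (fun k m => counit (R := ℂ) k •
          sw (fun p v => ff r p • antipode ℂ (antipode ℂ v)) m) a :=
        (sw_counit_left (F := fun m =>
          sw (fun p v => ff r p • antipode ℂ (antipode ℂ v)) m) a).symm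
    _ = sw (fun k m => sw (fun w x => w * antipode ℂ x *
          sw (fun p v => ff r p • antipode ℂ (antipode ℂ v)) m) k) a := by
        refine sw_congr (fun k m => ?_) a
        rw [← map_sw (φ := fun z : H => z * sw (fun p v => ff r p • antipode ℂ (antipode ℂ v)) m)
          (fun w x => w * antipode ℂ x), sw_mul_antipode, smul_one_mul]
    _ = sw (fun w n => sw (fun x m => w * antipode ℂ x *
          sw (fun p v => ff r p • antipode ℂ (antipode ℂ v)) m) n) a :=
        sw_coassoc (F := fun w x m => w * antipode ℂ x *
          sw (fun p v => ff r p • antipode ℂ (antipode ℂ v)) m) a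
    _ = _ := by
        refine sw_congr (fun w n => ?_) a
        simp only [mul_assoc]
        rw [← map_sw (φ := fun z : H => w * z), G]
        simp

/-- `r(a₍₁₎ ⊗ a₍₃₎) f(a₍₂₎) = ε(a)`. -/
lemma mm_eq (r : H →ₗ[ℂ] H →ₗ[ℂ] ℂ)
    (hr3 : ∀ a b c, r a (b * c) = sw (fun x y => r x c * r y b) a)
    (hr3' : ∀ a : H, r a 1 = counit (R := ℂ) a) (a : H) :
    sw (fun p m => sw (fun x y => r p y * ff r x) m) a = counit (R := ℂ) a := by
  calc sw (fun p m => sw (fun x y => r p y * ff r x) m) a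
      = sw (fun p m => sw (fun x y => sw (fun u v => r p y * r u (antipode ℂ v)) x) m) a := by
        refine sw_congr (fun p m => sw_congr (fun x y => ?_) m) a
        rw [ff_apply]
        exact map_sw (φ := fun z : ℂ => r p y * z) _ _
    _ = sw (fun p m => sw (fun u t => sw (fun v y => r p y * r u (antipode ℂ v)) t) m) a := by
        refine sw_congr (fun p m => ?_) a
        exact sw_coassoc (F := fun u v y => r p y * r u (antipode ℂ v)) m
    _ = sw (fun k t => sw (fun p u => sw (fun v y => r p y * r u (antipode ℂ v)) t) k) a :=
        (sw_coassoc (F := fun p u t => sw (fun v y => r p y * r u (antipode ℂ v)) t) a).symm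
    _ = sw (fun k t => counit (R := ℂ) t • counit (R := ℂ) k) a := by
        refine sw_congr (fun k t => ?_) a
        calc _ = sw (fun v y => r k (antipode ℂ v * y)) t := by
              rw [sw_comm]
              exact sw_congr (fun v y => (hr3 _ _ _).symm) t
          _ = r k (sw (fun v y => antipode ℂ v * y) t) :=
              (map_sw (φ := fun z => r k z) _ _).symm
          _ = _ := by rw [sw_antipode_mul]; simp [hr3']
    _ = _ := sw_counit_right (F := fun k => counit (R := ℂ) k) a

/-- `f * g = ε`. -/
lemma ff_gg (r : H →ₗ[ℂ] H →ₗ[ℂ] ℂ)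
    (hr1 : ∀ a b, sw (fun x y => sw (fun u v => r x u • (y * v)) b) a
      = sw (fun x y => sw (fun u v => r y v • (u * x)) b) a)
    (hr3 : ∀ a b c, r a (b * c) = sw (fun x y => r x c * r y b) a)
    (hr3' : ∀ a : H, r a 1 = counit (R := ℂ) a) (a : H) :
    sw (fun p q => ff r p * gg r q) a = counit (R := ℂ) a := by
  rw [← mm_eq r hr3 hr3']
  calc sw (fun p q => ff r p * gg r q) a
      = sw (fun p q => sw (fun x y => ff r p * r (antipode ℂ (antipode ℂ x)) y) q) a := by
        refine sw_congr (fun p q => ?_) a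
        rw [gg_apply]
        exact map_sw (φ := fun z : ℂ => ff r p * z) _ _
    _ = sw (fun k y => sw (fun p x => ff r p * r (antipode ℂ (antipode ℂ x)) y) k) a :=
        (sw_coassoc (F := fun p x y => ff r p * r (antipode ℂ (antipode ℂ x)) y) a).symm
    _ = sw (fun k y => sw (fun p x => r p y * ff r x) k) a := by
        refine sw_congr (fun k y => ?_) a
        have := congrArg (fun z => r z y) (ff_sq r hr1 k)
        beta_reduce at this
        rw [map_sw (φ := fun z => r z y), map_sw (φ := fun z => r z y)] at this
        simpa [mul_comm] using this
    _ = _ := sw_coassoc (F := fun p x y => r p y * ff r x) a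

/-- `f(a₍₁₎) S²(a₍₂₎) g(a₍₃₎) = a`. -/
lemma ff_sq_gg (r : H →ₗ[ℂ] H →ₗ[ℂ] ℂ)
    (hr1 : ∀ a b, sw (fun x y => sw (fun u v => r x u • (y * v)) b) a
      = sw (fun x y => sw (fun u v => r y v • (u * x)) b) a)
    (hr3 : ∀ a b c, r a (b * c) = sw (fun x y => r x c * r y b) a)
    (hr3' : ∀ a : H, r a 1 = counit (R := ℂ) a) (a : H) :
    sw (fun p n => sw (fun x k => ff r p • gg r k • antipode ℂ (antipode ℂ x)) n) a = a := by
  calc sw (fun p n => sw (fun x k => ff r p • gg r k • antipode ℂ (antipode ℂ x)) n) a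
      = sw (fun l k => sw (fun p x => ff r p • gg r k • antipode ℂ (antipode ℂ x)) l) a :=
        (sw_coassoc (F := fun p x k => ff r p • gg r k • antipode ℂ (antipode ℂ x)) a).symm
    _ = sw (fun l k => sw (fun x y => (ff r y * gg r k) • x) l) a := by
        refine sw_congr (fun l k => ?_) a
        have := congrArg (fun z => gg r k • z) (ff_sq r hr1 l)
        beta_reduce at this
        rw [map_sw (φ := fun z : H => gg r k • z), map_sw (φ := fun z : H => gg r k • z)] at this
        refine Eq.trans ?_ (this.trans ?_)
        · exact sw_congr (fun p x => smul_comm _ _ _) l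
        · exact sw_congr (fun p x => by rw [smul_smul, mul_comm]) l
    _ = sw (fun x m => sw (fun y k => (ff r y * gg r k) • x) m) a :=
        sw_coassoc (F := fun x y k => (ff r y * gg r k) • x) a
    _ = sw (fun x m => counit (R := ℂ) m • x) a := by
        refine sw_congr (fun x m => ?_) a
        rw [← map_sw (φ := fun z : ℂ => z • x) (fun y k => ff r y * gg r k),
          ff_gg r hr1 hr3 hr3']
    _ = a := sw_counit_right (F := fun x => x) a

/-- Expressing sums over the fourfold coproduct by nested Sweedler sums. -/
lemma comul4_sum (r rbar : H →ₗ[ℂ] H →ₗ[ℂ] ℂ) (a : H) {ι : Type} [Fintype ι]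
    (c1 c2 c3 c4 c5 : ι → H)
    (h : comul4 a = ∑ t, c1 t ⊗ₜ[ℂ] (c2 t ⊗ₜ[ℂ] (c3 t ⊗ₜ[ℂ] (c4 t ⊗ₜ[ℂ] c5 t)))) :
    ∑ t, (r (c1 t) (antipode ℂ (c2 t)) *
      rbar (antipode ℂ (antipode ℂ (c4 t))) (antipode ℂ (c5 t))) • antipode ℂ (c3 t)
    = sw (fun x1 m => sw (fun x2 n => sw (fun x3 k => sw (fun x4 x5 =>
        (r x1 (antipode ℂ x2) * rbar (antipode ℂ (antipode ℂ x4)) (antipode ℂ x5)) •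
          antipode ℂ x3) k) n) m) a := by
  let A : H ⊗[ℂ] H →ₗ[ℂ] ℂ := TensorProduct.lift (r.compl₂ (antipode ℂ))
  let B : H ⊗[ℂ] H →ₗ[ℂ] ℂ :=
    TensorProduct.lift (rbar.compl₁₂ (antipode ℂ ∘ₗ antipode ℂ) (antipode ℂ))
  let Ψ : H ⊗[ℂ] (H ⊗[ℂ] H) →ₗ[ℂ] H :=
    TensorProduct.lift ((LinearMap.lsmul ℂ H ∘ₗ B).flip ∘ₗ antipode ℂ)
  let Φ : H ⊗[ℂ] (H ⊗[ℂ] (H ⊗[ℂ] (H ⊗[ℂ] H))) →ₗ[ℂ] H :=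
    TensorProduct.lift ((LinearMap.lsmul ℂ H).compl₁₂ A Ψ) ∘ₗ
      (TensorProduct.assoc ℂ H H (H ⊗[ℂ] (H ⊗[ℂ] H))).symm.toLinearMap
  have hΦ : ∀ x1 x2 x3 x4 x5 : H, Φ (x1 ⊗ₜ (x2 ⊗ₜ (x3 ⊗ₜ (x4 ⊗ₜ x5)))) =
      (r x1 (antipode ℂ x2) * rbar (antipode ℂ (antipode ℂ x4)) (antipode ℂ x5)) •
          antipode ℂ x3 := by
    intro x1 x2 x3 x4 x5
    simp [Φ, Ψ, A, B, mul_smul]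
    exact smul_comm _ _ _
  have h2 : comul4 a = sw (fun x1 m => sw (fun x2 n => sw (fun x3 k => sw (fun x4 x5 =>
      x1 ⊗ₜ[ℂ] (x2 ⊗ₜ[ℂ] (x3 ⊗ₜ[ℂ] (x4 ⊗ₜ[ℂ] x5)))) k) n) m) a := by
    have e : ∀ b : H, comul (R := ℂ) b = sw (fun x y => x ⊗ₜ[ℂ] y) b :=
      fun b => (Coalgebra.Repr.arbitrary ℂ b).eq.symm
    simp only [comul4, LinearMap.comp_apply]
    rw [e a]
    simp only [sw, map_sum, LinearMap.lTensor_tmul]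
    refine Finset.sum_congr rfl (fun i _ => ?_)
    rw [e]
    simp only [sw, map_sum, LinearMap.lTensor_tmul, tmul_sum]
    refine Finset.sum_congr rfl (fun j _ => ?_)
    rw [e]
    simp only [sw, map_sum, LinearMap.lTensor_tmul, tmul_sum]
    refine Finset.sum_congr rfl (fun k _ => ?_)
    rw [e]
    simp only [sw, tmul_sum]
  have h3 := congrArg Φ (h.symm.trans h2)
  simpa only [sw, map_sum, hΦ] using h3

end Main

/-- for a coquasitriangular Hopf algebra `H` with universal r-form `r`
and convolution inverse `r̄`, the antipode `S` is bijective, with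
`S⁻¹(a) = r(a₍₁₎ ⊗ S(a₍₂₎)) S(a₍₃₎) r̄(S²(a₍₄₎) ⊗ S(a₍₅₎))`. -/
theorem stmt9
    {H : Type} [Ring H] [HopfAlgebra ℂ H]
    (r rbar : H →ₗ[ℂ] H →ₗ[ℂ] ℂ)
    (hr1 : ∀ (a b : H) (ι κ : Type) (_ : Fintype ι) (_ : Fintype κ)
      (a1 a2 : ι → H) (b1 b2 : κ → H),
      Coalgebra.comul (R := ℂ) a = ∑ t, a1 t ⊗ₜ[ℂ] a2 t →
      Coalgebra.comul (R := ℂ) b = ∑ s, b1 s ⊗ₜ[ℂ] b2 s →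
      ∑ t, ∑ s, r (a1 t) (b1 s) • (a2 t * b2 s)
        = ∑ t, ∑ s, r (a2 t) (b2 s) • (b1 s * a1 t))
    (hr2 : ∀ (a b c : H) (κ : Type) (_ : Fintype κ) (c1 c2 : κ → H),
      Coalgebra.comul (R := ℂ) c = ∑ s, c1 s ⊗ₜ[ℂ] c2 s →
      r (a * b) c = ∑ s, r a (c1 s) * r b (c2 s))
    (hr2' : ∀ c : H, r 1 c = Coalgebra.counit (R := ℂ) c)
    (hr3 : ∀ (a b c : H) (ι : Type) (_ : Fintype ι) (a1 a2 : ι → H),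
      Coalgebra.comul (R := ℂ) a = ∑ t, a1 t ⊗ₜ[ℂ] a2 t →
      r a (b * c) = ∑ t, r (a1 t) c * r (a2 t) b)
    (hr3' : ∀ a : H, r a 1 = Coalgebra.counit (R := ℂ) a)
    -- r̄ is a two-sided convolution inverse of r
    (hrbar : ∀ (a b : H) (ι κ : Type) (_ : Fintype ι) (_ : Fintype κ)
      (a1 a2 : ι → H) (b1 b2 : κ → H),
      Coalgebra.comul (R := ℂ) a = ∑ t, a1 t ⊗ₜ[ℂ] a2 t →
      Coalgebra.comul (R := ℂ) b = ∑ s, b1 s ⊗ₜ[ℂ] b2 s →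
      (∑ t, ∑ s, rbar (a1 t) (b1 s) * r (a2 t) (b2 s)
          = Coalgebra.counit (R := ℂ) a * Coalgebra.counit (R := ℂ) b) ∧
      (∑ t, ∑ s, r (a1 t) (b1 s) * rbar (a2 t) (b2 s)
          = Coalgebra.counit (R := ℂ) a * Coalgebra.counit (R := ℂ) b)) :
    Function.Bijective (HopfAlgebra.antipode (R := ℂ) (A := H)) ∧
    ∀ (a : H) (ι : Type) (_ : Fintype ι) (c1 c2 c3 c4 c5 : ι → H),
      comul4 a = ∑ t, c1 t ⊗ₜ[ℂ] (c2 t ⊗ₜ[ℂ] (c3 t ⊗ₜ[ℂ] (c4 t ⊗ₜ[ℂ] c5 t))) →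
      HopfAlgebra.antipode (R := ℂ)
        (∑ t, (r (c1 t) (HopfAlgebra.antipode (R := ℂ) (c2 t)) *
            rbar (HopfAlgebra.antipode (R := ℂ) (HopfAlgebra.antipode (R := ℂ) (c4 t)))
              (HopfAlgebra.antipode (R := ℂ) (c5 t))) •
          HopfAlgebra.antipode (R := ℂ) (c3 t)) = a := by
  have sum_sw : ∀ {M : Type} [AddCommGroup M] (F : H → H → M) (a : H),
      ∑ t : (Coalgebra.Repr.arbitrary ℂ a).index,
        F ((Coalgebra.Repr.arbitrary ℂ a).left t) ((Coalgebra.Repr.arbitrary ℂ a).right t)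
        = sw F a := by
    intro M _ F a
    exact Finset.sum_coe_sort (Coalgebra.Repr.arbitrary ℂ a).index (fun i =>
      F ((Coalgebra.Repr.arbitrary ℂ a).left i) ((Coalgebra.Repr.arbitrary ℂ a).right i))
  have rep : ∀ a : H, comul (R := ℂ) a = ∑ t : (Coalgebra.Repr.arbitrary ℂ a).index,
      (Coalgebra.Repr.arbitrary ℂ a).left t ⊗ₜ[ℂ] (Coalgebra.Repr.arbitrary ℂ a).right t := by
    intro a
    rw [sum_sw (fun x y => x ⊗ₜ[ℂ] y) a]
    exact (Coalgebra.Repr.arbitrary ℂ a).eq.symm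
  have k1 : ∀ a b, sw (fun x y => sw (fun u v => r x u • (y * v)) b) a
      = sw (fun x y => sw (fun u v => r y v • (u * x)) b) a := by
    intro a b
    have := hr1 a b _ _ inferInstance inferInstance _ _ _ _ (rep a) (rep b)
    simpa only [← sum_sw] using this
  have k2 : ∀ a b c, r (a * b) c = sw (fun u v => r a u * r b v) c := by
    intro a b c
    rw [hr2 a b c _ inferInstance _ _ (rep c)]
    simp only [← sum_sw]
  have k3 : ∀ a b c, r a (b * c) = sw (fun x y => r x c * r y b) a := by
    intro a b c
    rw [hr3 a b c _ inferInstance _ _ (rep a)]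
    simp only [← sum_sw]
  have k4 : ∀ a b, sw (fun x y => sw (fun u v => rbar x u * r y v) b) a
      = counit (R := ℂ) a * counit (R := ℂ) b := by
    intro a b
    have := (hrbar a b _ _ inferInstance inferInstance _ _ _ _ (rep a) (rep b)).1
    simpa only [← sum_sw] using this
  obtain ⟨hb, hS⟩ := r_antipode r rbar k2 hr2' k3 hr3' k4
  have hU := ff_sq_gg r k1 k3 hr3'
  have main : ∀ (a : H) (ι : Type) (_ : Fintype ι) (c1 c2 c3 c4 c5 : ι → H),
      comul4 a = ∑ t, c1 t ⊗ₜ[ℂ] (c2 t ⊗ₜ[ℂ] (c3 t ⊗ₜ[ℂ] (c4 t ⊗ₜ[ℂ] c5 t))) →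
      HopfAlgebra.antipode (R := ℂ)
        (∑ t, (r (c1 t) (HopfAlgebra.antipode (R := ℂ) (c2 t)) *
            rbar (HopfAlgebra.antipode (R := ℂ) (HopfAlgebra.antipode (R := ℂ) (c4 t)))
              (HopfAlgebra.antipode (R := ℂ) (c5 t))) •
          HopfAlgebra.antipode (R := ℂ) (c3 t)) = a := by
    intro a ι _ c1 c2 c3 c4 c5 h
    rw [comul4_sum r rbar a c1 c2 c3 c4 c5 h]
    have e1 : sw (fun x1 m => sw (fun x2 n => sw (fun x3 k => sw (fun x4 x5 =>
        (r x1 (antipode ℂ x2) * rbar (antipode ℂ (antipode ℂ x4)) (antipode ℂ x5)) •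
          antipode ℂ x3) k) n) m) a
        = sw (fun p n => sw (fun x k => ff r p • gg r k • antipode ℂ x) n) a := by
      calc _ = sw (fun x1 m => sw (fun x2 n => sw (fun x3 k =>
              r x1 (antipode ℂ x2) • gg r k • antipode ℂ x3) n) m) a := by
            refine sw_congr (fun x1 m => sw_congr (fun x2 n => sw_congr (fun x3 k => ?_) n) m) a
            rw [gg_apply, map_sw (φ := fun z : ℂ => r x1 (antipode ℂ x2) • z • antipode ℂ x3)]
            refine sw_congr (fun x4 x5 => ?_) k
            rw [hb, hS, mul_smul]
        _ = sw (fun p n => sw (fun x1 x2 => sw (fun x3 k =>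
              r x1 (antipode ℂ x2) • gg r k • antipode ℂ x3) n) p) a :=
            (sw_coassoc (F := fun x1 x2 n => sw (fun x3 k =>
              r x1 (antipode ℂ x2) • gg r k • antipode ℂ x3) n) a).symm
        _ = _ := by
            refine sw_congr (fun p n => ?_) a
            rw [sw_comm]
            refine sw_congr (fun x k => ?_) n
            rw [ff_apply]
            exact (map_sw (φ := fun z : ℂ => z • gg r k • antipode ℂ x) _ _).symm
    rw [e1, map_sw (φ := fun z => antipode ℂ z)]
    conv_rhs => rw [← hU a]
    refine sw_congr (fun p n => ?_) a
    rw [map_sw (φ := fun z => antipode ℂ z)]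
    exact sw_congr (fun x k => by simp) n
  have fS : ∀ a, ff r (antipode ℂ (antipode ℂ a)) = ff r a := by
    intro a
    rw [ff_apply, ff_apply, sw_antipode, sw_antipode]
    exact sw_congr (fun x y => by rw [hS, hS]) a
  have gS : ∀ a, gg r (antipode ℂ (antipode ℂ a)) = gg r a := by
    intro a
    rw [gg_apply, gg_apply, sw_antipode, sw_antipode]
    exact sw_congr (fun x y => by rw [hS, hS]) a
  have inj : ∀ a, sw (fun p n => sw (fun x k => ff r p • gg r k • x) n)
      (antipode ℂ (antipode ℂ a)) = a := by
    intro a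
    rw [sw_antipode, sw_antipode]
    conv_rhs => rw [← hU a]
    refine sw_congr (fun p n => ?_) a
    rw [sw_antipode, sw_antipode]
    exact sw_congr (fun x k => by rw [fS, gS]) n
  refine ⟨⟨fun a b hab => ?_, fun a => ?_⟩, main⟩
  · rw [← inj a, ← inj b, hab]
  · refine ⟨antipode ℂ (sw (fun p n => sw (fun x k => ff r p • gg r k • x) n) a), ?_⟩
    conv_rhs => rw [← hU a]
    rw [map_sw (φ := fun z => antipode ℂ z), map_sw (φ := fun z => antipode ℂ z)]
    refine sw_congr (fun p n => ?_) a
    rw [map_sw (φ := fun z => antipode ℂ z), map_sw (φ := fun z => antipode ℂ z)]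
    exact sw_congr (fun x k => by simp) n
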